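/- Let D ≥ 0 and let x, y ∈ ℝ satisfy x + y ≤ -D. Then Φ(x)·Φ(y) ≤ Φ(-D/2)². (The product Φ(x)Φ(y) under the constraint x + y ≤ -D is maximized at x = y = -D/2, by log-concavity of Φ.) -/

import Mathlib

open Real MeasureTheory

/-- The standard Gaussian density. -/
noncomputable def gaussPdf (z : ℝ) : ℝ := (Real.sqrt (2 * Real.pi))⁻¹ * Real.exp (-z ^ 2 / 2)

/-- The standard normal CDF. -/
noncomputable def Phi (r : ℝ) : ℝ := ∫ z in Set.Iic r, gaussPdf z


lemma gaussPdf_cont : Continuous gaussPdf := by unfold gaussPdf; fun_prop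

lemma gaussPdf_nonneg (z : ℝ) : 0 ≤ gaussPdf z := by unfold gaussPdf; positivity

lemma gaussPdf_int : Integrable gaussPdf := by
  unfold gaussPdf
  have h := (integrable_exp_neg_mul_sq (b := 1/2) (by norm_num)).const_mul (Real.sqrt (2 * Real.pi))⁻¹
  refine h.congr (Filter.Eventually.of_forall fun z => ?_)
  simp only
  congr 2
  ring

lemma Phi_nonneg (r : ℝ) : 0 ≤ Phi r := integral_nonneg fun z => gaussPdf_nonneg z

lemma Phi_mono {a b : ℝ} (h : a ≤ b) : Phi a ≤ Phi b :=
  setIntegral_mono_set gaussPdf_int.integrableOn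
    (Filter.Eventually.of_forall fun z => gaussPdf_nonneg z)
    (Set.Iic_subset_Iic.2 h).eventuallyLE

lemma Phi_deriv (r : ℝ) : HasDerivAt Phi (gaussPdf r) r := by
  have h : Phi = fun r => Phi 0 + ∫ z in (0:ℝ)..r, gaussPdf z := by
    funext r
    have := intervalIntegral.integral_Iic_sub_Iic (μ := volume) (f := gaussPdf) (a := 0) (b := r)
      gaussPdf_int.integrableOn gaussPdf_int.integrableOn
    rw [← this]; unfold Phi; ring
  rw [h]
  exact (gaussPdf_cont.integral_hasStrictDerivAt 0 r).hasDerivAt.const_add _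

lemma Phi_shift (a : ℝ) : Phi a = ∫ s in Set.Iic (0:ℝ), gaussPdf (a + s) := by
  have := (measurePreserving_add_left (volume : Measure ℝ) a).setIntegral_preimage_emb
    (measurableEmbedding_addLeft a) gaussPdf (Set.Iic a)
  rw [Phi, ← this]
  simp

lemma ratio {a b : ℝ} (h : a ≤ b) : gaussPdf b * Phi a ≤ gaussPdf a * Phi b := by
  rw [Phi_shift a, Phi_shift b, ← integral_const_mul, ← integral_const_mul]
  refine setIntegral_mono_on ((gaussPdf_int.comp_add_left a).const_mul _).integrableOn
    ((gaussPdf_int.comp_add_left b).const_mul _).integrableOn measurableSet_Iic ?_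
  intro s hs
  have hs : s ≤ 0 := hs
  unfold gaussPdf
  rw [mul_mul_mul_comm, mul_mul_mul_comm _ _ _ (rexp (-(b + s) ^ 2 / 2)), ← Real.exp_add,
    ← Real.exp_add]
  gcongr ?_ * ?_
  apply Real.exp_le_exp.2
  nlinarith [mul_nonneg (sub_nonneg.2 h) (neg_nonneg.2 hs)]

lemma sym_le (m t : ℝ) (ht : 0 ≤ t) : Phi (m + t) * Phi (m - t) ≤ Phi m ^ 2 := by
  have hd : ∀ t, HasDerivAt (fun t => Phi (m + t) * Phi (m - t))
      (gaussPdf (m + t) * Phi (m - t) + Phi (m + t) * (-gaussPdf (m - t))) t := by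
    intro t
    exact ((Phi_deriv (m + t)).comp_const_add m t).mul ((Phi_deriv (m - t)).comp_const_sub m t)
  have := antitoneOn_of_deriv_nonpos (convex_Ici (0:ℝ))
    (f := fun t => Phi (m + t) * Phi (m - t))
    (fun t _ => (hd t).continuousAt.continuousWithinAt)
    (fun t _ => (hd t).differentiableAt.differentiableWithinAt) (by
      intro t ht
      rw [interior_Ici] at ht
      have ht : 0 < t := ht
      rw [(hd t).deriv]
      have := ratio (a := m - t) (b := m + t) (by linarith)
      linarith)
  have h := this (Set.mem_Ici.2 le_rfl) (Set.mem_Ici.2 ht) ht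
  simp only [add_zero, sub_zero] at h
  rw [sq]; exact h

/-- If `D ≥ 0` and `x + y ≤ -D`, then `Φ(x)·Φ(y) ≤ Φ(-D/2)²`. -/
theorem stmt4 (D x y : ℝ) (hD : 0 ≤ D) (hxy : x + y ≤ -D) :
    Phi x * Phi y ≤ (Phi (-D / 2)) ^ 2 := by
  have h1 : Phi x * Phi y ≤ Phi x * Phi (-D - x) :=
    mul_le_mul_of_nonneg_left (Phi_mono (by linarith)) (Phi_nonneg x)
  refine h1.trans ?_
  rcases le_total (-D / 2) x with h | h
  · have := sym_le (-D / 2) (x - -D / 2) (by linarith)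
    rwa [show -D / 2 + (x - -D / 2) = x by ring, show -D / 2 - (x - -D / 2) = -D - x by ring] at this
  · have := sym_le (-D / 2) (-D / 2 - x) (by linarith)
    rw [mul_comm]
    rwa [show -D / 2 + (-D / 2 - x) = -D - x by ring, show -D / 2 - (-D / 2 - x) = x by ring] at this
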